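/- Let V be an n-dimensional vector space over the finite field 𝔽_q with n ≥ 2t+1 and t ≥ 1, and let F be a cover-free family of 2t-dimensional subspaces of V with |F| = [n-1 choose t]_q / [2t-1 choose t]_q. Then for every F ∈ F, |M_t(F)| = q^t [2t-1 choose t]_q and |N_t(F)| = [2t-1 choose t-1]_q; moreover |Ω| = q^t [n-1 choose t]_q and |Γ| = [n-1 choose t-1]_q, where Ω is the set of t-dimensional subspaces A of V with |F_A| = 1 and Γ is the set of t-dimensional subspaces A of V with |F_A| = (q^{n-t}-1)/(q^t-1). -/

import Mathlib

/-- A family of subspaces is cover-free if there are no three distinct members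
`F₀, F₁, F₂` with `F₀ ≤ (F₀ ⊓ F₁) ⊔ (F₀ ⊓ F₂)`. -/
def IsCoverFree {K V : Type*} [Field K] [AddCommGroup V] [Module K V]
    (F : Set (Submodule K V)) : Prop :=
  ¬ ∃ F₀ F₁ F₂ : Submodule K V, F₀ ∈ F ∧ F₁ ∈ F ∧ F₂ ∈ F ∧
    F₀ ≠ F₁ ∧ F₀ ≠ F₂ ∧ F₁ ≠ F₂ ∧ F₀ ≤ (F₀ ⊓ F₁) ⊔ (F₀ ⊓ F₂)

/-- The Gaussian binomial coefficient `[m choose k]_q` as a rational number. -/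
def GaussQ (q m k : ℕ) : ℚ :=
  ∏ i ∈ Finset.range k, ((q : ℚ) ^ (m - i) - 1) / ((q : ℚ) ^ (k - i) - 1)

/-- `M_t(F₀)`: the `t`-dimensional subspaces of `F₀` that lie in exactly one member
of the family. -/
def Mset {K V : Type*} [Field K] [AddCommGroup V] [Module K V]
    (F : Set (Submodule K V)) (t : ℕ) (F₀ : Submodule K V) : Set (Submodule K V) :=
  {T | T ≤ F₀ ∧ Module.finrank K T = t ∧ {G ∈ F | T ≤ G}.ncard = 1}

/-- `N_t(F₀)`: the `t`-dimensional subspaces of `F₀` lying in more than one member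
of the family. -/
def Nset {K V : Type*} [Field K] [AddCommGroup V] [Module K V]
    (F : Set (Submodule K V)) (t : ℕ) (F₀ : Submodule K V) : Set (Submodule K V) :=
  {T | T ≤ F₀ ∧ Module.finrank K T = t ∧ 1 < {G ∈ F | T ≤ G}.ncard}

/-!
Let `F` be a cover-free family of `2t`-spaces in an `n`-space, and let `G ∈ F`. Two disjoint
`t`-subspaces of `G` span `G`, so cover-freeness forbids them both to lie in further members:
`N_t(G)` is an intersecting family. Since a spread of `G` contains at most one element of any
translate of `N_t(G)`, averaging over `GL(G)` gives `|N_t(G)| ≤ [2t-1 choose t-1]_q`; the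
shortfall is summed over `G` in the defect `δ` of `F`.

If the members through a `t`-space `A` pairwise meet in `A`, they form a partial spread of
`V / A`, so there are at most `m = (q^(n-t) - 1) / (q^t - 1)` of them. A member meeting another one in
dimension greater than `t` owns many `(t-1)`-spaces, namely all complements of a `(t+1)`-space in
the intersection; extending owned `(t-1)`-spaces by vectors outside their member produces
`t`-spaces that lie in no member, so such wide members are compensated by the number `Z` of
uncovered `t`-spaces.

Counting the pairs of a non-wide member and a `t`-space it shares with another member, and using
the prescribed size of `F`, yields `(m - 1) (δ + Z) ≤ 0`. Hence `δ = Z = 0`, there are no wide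
members, and every inequality above is an equality.
-/

section GaussianBinomial

variable {q : ℕ}

theorem pow_sub_one_pos (hq : 1 < q) {k : ℕ} (hk : k ≠ 0) : 0 < (q : ℚ) ^ k - 1 :=
  sub_pos.mpr (one_lt_pow₀ (by exact_mod_cast hq) hk)

theorem one_lt_pow_sub_one_div_pow_sub_one (hq : 1 < q) {k m : ℕ} (hk : k ≠ 0) (hkm : k < m) :
    1 < ((q : ℚ) ^ m - 1) / ((q : ℚ) ^ k - 1) := by
  rw [one_lt_div (pow_sub_one_pos hq hk)]
  exact sub_lt_sub_right (pow_lt_pow_right₀ (by exact_mod_cast hq) hkm) 1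

theorem gaussQ_eq_zero {m k : ℕ} (h : m < k) : GaussQ q m k = 0 :=
  Finset.prod_eq_zero (Finset.mem_range.mpr h) (by simp)

theorem gaussQ_self (hq : 1 < q) (m : ℕ) : GaussQ q m m = 1 :=
  Finset.prod_eq_one fun _ hi =>
    div_self (pow_sub_one_pos hq (Nat.sub_ne_zero_of_lt (Finset.mem_range.mp hi))).ne'

theorem gaussQ_pos (hq : 1 < q) {m k : ℕ} (h : k ≤ m) : 0 < GaussQ q m k := by
  refine Finset.prod_pos fun i hi => ?_
  have hi : i < k := Finset.mem_range.mp hi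
  exact div_pos (pow_sub_one_pos hq (by omega)) (pow_sub_one_pos hq (by omega))

theorem gaussQ_succ_succ_mul (hq : 1 < q) (m k : ℕ) :
    GaussQ q (m + 1) (k + 1) * ((q : ℚ) ^ (k + 1) - 1) =
      ((q : ℚ) ^ (m + 1) - 1) * GaussQ q m k := by
  have hk := (pow_sub_one_pos hq k.succ_ne_zero).ne'
  rw [GaussQ, GaussQ, Finset.prod_range_succ']
  simp only [Nat.add_sub_add_right, Nat.sub_zero]
  field_simp

theorem gaussQ_succ_right_mul (hq : 1 < q) (m k : ℕ) :
    GaussQ q m (k + 1) * ((q : ℚ) ^ (k + 1) - 1) =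
      ((q : ℚ) ^ (m - k) - 1) * GaussQ q m k := by
  have hk := (pow_sub_one_pos hq k.succ_ne_zero).ne'
  have hden : ∏ i ∈ Finset.range k, ((q : ℚ) ^ (k - i) - 1) ≠ 0 :=
    Finset.prod_ne_zero_iff.mpr fun i hi =>
      (pow_sub_one_pos hq (Nat.sub_ne_zero_of_lt (Finset.mem_range.mp hi))).ne'
  rw [GaussQ, GaussQ, Finset.prod_div_distrib, Finset.prod_div_distrib, Finset.prod_range_succ,
    Finset.prod_range_succ' fun i => (q : ℚ) ^ (k + 1 - i) - 1]
  simp only [Nat.add_sub_add_right, Nat.sub_zero]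
  field_simp

theorem gaussQ_succ_right (hq : 1 < q) (m k : ℕ) :
    GaussQ q m (k + 1) =
      ((q : ℚ) ^ (m - k) - 1) / ((q : ℚ) ^ (k + 1) - 1) * GaussQ q m k := by
  rw [div_mul_eq_mul_div, eq_div_iff (pow_sub_one_pos hq k.succ_ne_zero).ne',
    gaussQ_succ_right_mul hq]

theorem gaussQ_succ_left_mul (hq : 1 < q) (m k : ℕ) :
    ((q : ℚ) ^ (m + 1 - k) - 1) * GaussQ q (m + 1) k = ((q : ℚ) ^ (m + 1) - 1) * GaussQ q m k :=
  (gaussQ_succ_right_mul hq (m + 1) k).symm.trans (gaussQ_succ_succ_mul hq m k)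

theorem gaussQ_add_symm (hq : 1 < q) (a b : ℕ) : GaussQ q (a + b) a = GaussQ q (a + b) b := by
  induction a with
  | zero => rw [Nat.zero_add, gaussQ_self hq, GaussQ, Finset.prod_range_zero]
  | succ a ih =>
    have hleft := gaussQ_succ_left_mul hq (a + b) b
    rw [show a + b + 1 - b = a + 1 by omega, ← ih, ← gaussQ_succ_succ_mul hq, mul_comm] at hleft
    rw [Nat.add_right_comm]
    exact (mul_right_cancel₀ (pow_sub_one_pos hq a.succ_ne_zero).ne' hleft).symm

theorem gaussQ_two_mul_add_one_succ (hq : 1 < q) (s : ℕ) :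
    GaussQ q (2 * s + 1) (s + 1) = GaussQ q (2 * s + 1) s := by
  rw [two_mul, add_assoc, gaussQ_add_symm hq]

theorem gaussQ_succ_succ (hq : 1 < q) {m k : ℕ} (h : k ≤ m) :
    GaussQ q (m + 1) (k + 1) = (q : ℚ) ^ (k + 1) * GaussQ q m (k + 1) + GaussQ q m k := by
  have hpow : (q : ℚ) ^ (m + 1) = q ^ (k + 1) * q ^ (m - k) := by
    rw [← pow_add]; congr 1; omega
  refine mul_right_cancel₀ (pow_sub_one_pos hq (Nat.add_one_ne_zero k)).ne' ?_
  linear_combination gaussQ_succ_succ_mul hq m k - (q : ℚ) ^ (k + 1) * gaussQ_succ_right_mul hq m k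
    + GaussQ q m k * hpow

theorem gaussQ_add_le_pow (hq : 1 < q) (m k : ℕ) :
    GaussQ q (m + k) k ≤ (q : ℚ) ^ ((m + 1) * k) := by
  have hq2 : (2 : ℚ) ≤ q := by exact_mod_cast hq
  have hfactor (j : ℕ) (hj : j ≠ 0) : ((q : ℚ) ^ (m + j) - 1) / (q ^ j - 1) ≤ q ^ (m + 1) := by
    rw [div_le_iff₀ (pow_sub_one_pos hq hj)]
    have hdouble : 2 * (q : ℚ) ^ (m + j) ≤ q ^ (m + 1) * q ^ j := by
      rw [pow_succ', mul_assoc, ← pow_add]; gcongr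
    have hmono : (q : ℚ) ^ (m + 1) ≤ q ^ (m + j) := by
      gcongr
      · linarith
      · omega
    linarith
  calc GaussQ q (m + k) k
      ≤ ∏ _i ∈ Finset.range k, (q : ℚ) ^ (m + 1) := by
        refine Finset.prod_le_prod (fun i hi => ?_) fun i hi => ?_
        all_goals have hi : i < k := Finset.mem_range.mp hi
        · exact div_nonneg (pow_sub_one_pos hq (by omega)).le (pow_sub_one_pos hq (by omega)).le
        · rw [Nat.add_sub_assoc hi.le]
          exact hfactor (k - i) (by omega)
    _ = (q : ℚ) ^ ((m + 1) * k) := by rw [Finset.prod_const, Finset.card_range, ← pow_mul]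

end GaussianBinomial

section Subspaces

open Module

variable {K V : Type*} [Field K] [AddCommGroup V] [Module K V]

theorem ncard_setOf_le_and (W : Submodule K V) (p : Submodule K V → Prop) :
    {T | T ≤ W ∧ p T}.ncard = {T : Submodule K W | p (T.map W.subtype)}.ncard := by
  rw [← Set.ncard_image_of_injective _ (Submodule.map_injective_of_injective W.injective_subtype)]
  congr 1
  ext T
  constructor
  · rintro ⟨hTW, hT⟩
    have hmap : (T.comap W.subtype).map W.subtype = T := by
      rw [Submodule.map_comap_subtype, inf_eq_right.mpr hTW]
    exact ⟨T.comap W.subtype, by simpa only [Set.mem_ofPred_eq, hmap], hmap⟩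
  · rintro ⟨T, hT, rfl⟩
    exact ⟨Submodule.map_subtype_le W T, hT⟩

theorem span_range_val_eq [FiniteDimensional K V] {T : Submodule K V} {k : ℕ}
    (hT : finrank K T = k) {v : Fin k → T} (hv : LinearIndependent K v) :
    Submodule.span K (Set.range fun i => (v i : V)) = T := by
  refine Submodule.eq_of_le_of_finrank_eq (Submodule.span_le.mpr ?_) ?_
  · rintro _ ⟨i, rfl⟩
    exact (v i).2
  · exact (finrank_span_eq_card (hv.map' T.subtype T.ker_subtype)).trans
      ((Fintype.card_fin k).trans hT.symm)

theorem bijective_sigma_linearIndependent [FiniteDimensional K V] (k : ℕ) :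
    Function.Bijective (fun x : (Σ T : {T : Submodule K V // finrank K T = k},
      {v : Fin k → T.1 // LinearIndependent K v}) =>
      (⟨fun i => x.2.1 i, x.2.2.map' x.1.1.subtype x.1.1.ker_subtype⟩ :
        {v : Fin k → V // LinearIndependent K v})) := by
  constructor
  · rintro ⟨⟨T, hT⟩, ⟨v, hv⟩⟩ ⟨⟨T', hT'⟩, ⟨v', hv'⟩⟩ h
    replace h : (fun i => (v i : V)) = fun i => (v' i : V) := congrArg Subtype.val h
    obtain rfl : T = T' := by rw [← span_range_val_eq hT hv, ← span_range_val_eq hT' hv', h]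
    obtain rfl : v = v' := funext fun i => Subtype.ext (congrFun h i)
    rfl
  · rintro ⟨v, hv⟩
    exact ⟨⟨⟨Submodule.span K (Set.range v), by simpa using finrank_span_eq_card hv⟩,
      ⟨fun i => ⟨v i, Submodule.subset_span ⟨i, rfl⟩⟩, linearIndependent_span hv⟩⟩, rfl⟩

theorem exists_le_finrank_eq [FiniteDimensional K V] {W : Submodule K V} {k : ℕ}
    (hk : k ≤ finrank K W) : ∃ T ≤ W, finrank K T = k := by
  obtain ⟨v, hv⟩ := exists_linearIndependent_of_le_finrank hk
  exact ⟨(Submodule.span K (Set.range v)).map W.subtype, Submodule.map_subtype_le _ _, by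
    rw [Submodule.finrank_map_subtype_eq, finrank_span_eq_card hv, Fintype.card_fin]⟩

variable [Fintype K] [Finite V]

theorem card_linearIndependent_fin {k : ℕ} (hk : k ≤ finrank K V) :
    (Nat.card {v : Fin k → V // LinearIndependent K v} : ℚ) =
      (∏ i ∈ Finset.range k, (Fintype.card K : ℚ) ^ i) *
        ∏ i ∈ Finset.range k, ((Fintype.card K : ℚ) ^ (finrank K V - i) - 1) := by
  rw [card_linearIndependent hk, Fin.prod_univ_eq_prod_range
    (fun i => Fintype.card K ^ finrank K V - Fintype.card K ^ i), ← Finset.prod_mul_distrib,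
    Nat.cast_prod]
  refine Finset.prod_congr rfl fun i hi => ?_
  have hi : i ≤ finrank K V := (Finset.mem_range.mp hi).le.trans hk
  rw [Nat.cast_sub (Nat.pow_le_pow_right Fintype.card_pos hi), mul_sub, ← pow_add,
    Nat.add_sub_cancel' hi, mul_one, Nat.cast_pow, Nat.cast_pow]

variable (K V) in
theorem ncard_finrank_eq (k : ℕ) :
    ({T : Submodule K V | finrank K T = k}.ncard : ℚ) =
      GaussQ (Fintype.card K) (finrank K V) k := by
  rcases lt_or_ge (finrank K V) k with hk | hk
  · rw [gaussQ_eq_zero hk, Nat.cast_eq_zero, Set.ncard_eq_zero]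
    exact Set.eq_empty_of_forall_notMem fun T hT => (T.finrank_le.trans_lt hk).ne hT
  have hq : 1 < Fintype.card K := Fintype.one_lt_card
  have := Fintype.ofFinite {T : Submodule K V // finrank K T = k}
  have hcount : (Nat.card {T : Submodule K V // finrank K T = k} : ℚ) *
      ((∏ i ∈ Finset.range k, (Fintype.card K : ℚ) ^ i) *
        ∏ i ∈ Finset.range k, ((Fintype.card K : ℚ) ^ (k - i) - 1)) =
      (Nat.card {v : Fin k → V // LinearIndependent K v} : ℚ) := by
    rw [← Nat.card_congr (Equiv.ofBijective _ (bijective_sigma_linearIndependent k)),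
      Nat.card_sigma, Nat.cast_sum, Nat.card_eq_fintype_card, ← Finset.card_univ,
      ← nsmul_eq_mul, ← Finset.sum_const]
    refine Finset.sum_congr rfl fun T _ => ?_
    rw [card_linearIndependent_fin T.2.ge, T.2]
  have hpow : ∏ i ∈ Finset.range k, (Fintype.card K : ℚ) ^ i ≠ 0 :=
    Finset.prod_ne_zero_iff.mpr fun i _ => pow_ne_zero _ (by exact_mod_cast Fintype.card_ne_zero)
  have hden : ∏ i ∈ Finset.range k, ((Fintype.card K : ℚ) ^ (k - i) - 1) ≠ 0 :=
    Finset.prod_ne_zero_iff.mpr fun i hi =>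
      (pow_sub_one_pos hq (Nat.sub_ne_zero_of_lt (Finset.mem_range.mp hi))).ne'
  rw [card_linearIndependent_fin hk, mul_left_comm] at hcount
  rw [GaussQ, Finset.prod_div_distrib, eq_div_iff hden]
  exact mul_left_cancel₀ hpow hcount

theorem ncard_le_and_finrank_eq (W : Submodule K V) (k : ℕ) :
    ({T | T ≤ W ∧ finrank K T = k}.ncard : ℚ) = GaussQ (Fintype.card K) (finrank K W) k := by
  rw [ncard_setOf_le_and W (fun T => finrank K T = k)]
  simp only [Submodule.finrank_map_subtype_eq]
  exact ncard_finrank_eq K W k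

theorem pow_le_ncard_isCompl (W : Submodule K V) :
    Fintype.card K ^ (finrank K (V ⧸ W) * finrank K W) ≤ {S | IsCompl W S}.ncard := by
  obtain ⟨f₀, hf₀⟩ := W.subtype.exists_leftInverse_of_injective W.ker_subtype
  have hproj (g : V ⧸ W →ₗ[K] W) (x : W) : (f₀ + g ∘ₗ W.mkQ) x = x := by
    simpa [(Submodule.Quotient.mk_eq_zero W).mpr x.2] using LinearMap.congr_fun hf₀ x
  have hinj : Function.Injective fun g : V ⧸ W →ₗ[K] W =>
      (⟨f₀ + g ∘ₗ W.mkQ, hproj g⟩ : {f : V →ₗ[K] W // ∀ x : W, f x = x}) := fun g g' h =>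
    Submodule.linearMap_qext W (add_left_cancel (congrArg Subtype.val h))
  have : Finite (V →ₗ[K] W) := DFunLike.finite _
  calc Fintype.card K ^ (finrank K (V ⧸ W) * finrank K W) = Nat.card (V ⧸ W →ₗ[K] W) := by
        rw [Module.natCard_eq_pow_finrank (K := K), finrank_linearMap, Nat.card_eq_fintype_card]
    _ ≤ Nat.card {f : V →ₗ[K] W // ∀ x : W, f x = x} :=
        Nat.card_le_card_of_injective _ hinj
    _ = {S | IsCompl W S}.ncard := (Nat.card_congr W.isComplEquivProj).symm

end Subspaces

section CliqueCoclique

open MulAction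

variable {G X : Type*} [Group G] [MulAction G X]

theorem card_stabilizer_eq_card_smul_eq {x y z : X} (hy : y ∈ orbit G x) (hz : z ∈ orbit G x) :
    Nat.card {g : G // g • y = z} = Nat.card (stabilizer G x) := by
  obtain ⟨a, rfl⟩ := hy
  obtain ⟨b, rfl⟩ := hz
  refine Nat.card_congr (((Equiv.mulRight a).trans (Equiv.mulLeft b⁻¹)).subtypeEquiv fun g => ?_)
  simp [mem_stabilizer_iff, mul_smul, inv_smul_eq_iff]

/-- Double count the triples `(g, s, n)` with `g • s = n`. -/
theorem ncard_mul_ncard_le_ncard_orbit [Finite G] {x : X} {N S : Set X}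
    (hN : N ⊆ orbit G x) (hS : S ⊆ orbit G x)
    (hNS : ∀ g : G, {s ∈ S | g • s ∈ N}.Subsingleton) :
    N.ncard * S.ncard ≤ (orbit G x).ncard := by
  have horbit : (orbit G x).Finite := Set.finite_range _
  have : Finite N := horbit.subset hN
  have : Finite S := horbit.subset hS
  have := Fintype.ofFinite N
  have := Fintype.ofFinite S
  have hinj : Function.Injective
      fun p : (Σ p : N × S, {g : G // g • (p.2 : X) = p.1}) => (p.2 : G) := by
    rintro ⟨⟨n, s⟩, g, hg⟩ ⟨⟨n', s'⟩, g', hg'⟩ (rfl : g = g')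
    obtain rfl : s = s' := Subtype.ext <|
      hNS g ⟨s.2, hg ▸ n.2⟩ ⟨s'.2, hg' ▸ n'.2⟩
    obtain rfl : n = n' := Subtype.ext (hg.symm.trans hg')
    rfl
  have hle := Nat.card_le_card_of_injective _ hinj
  rw [← Nat.card_congr (orbitProdStabilizerEquivGroup G x), Nat.card_prod, Nat.card_sigma,
    Finset.sum_congr rfl fun p _ => card_stabilizer_eq_card_smul_eq (hS p.2.2) (hN p.1.2),
    Finset.sum_const, Finset.card_univ, ← Nat.card_eq_fintype_card, Nat.card_prod,
    smul_eq_mul] at hle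
  exact Nat.le_of_mul_le_mul_right hle Nat.card_pos

end CliqueCoclique

section Spreads

open Module
open scoped LinearAlgebra.Projectivization Pointwise

variable {K E : Type*} [Field K] [AddCommGroup E] [Module K E]

theorem exists_finiteField_extension (K : Type*) [Field K] [Fintype K] {t : ℕ} (ht : t ≠ 0) :
    ∃ (L : Type) (_ : Field L) (_ : Algebra K L), finrank K L = t ∧
      Nat.card L = Fintype.card K ^ t := by
  obtain ⟨p, hp⟩ := CharP.exists K
  have : Fact p.Prime := ⟨CharP.char_is_prime K p⟩
  have : NeZero t := ⟨ht⟩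
  exact ⟨FiniteField.Extension K p t, inferInstance, inferInstance,
    FiniteField.finrank_extension K p t, by
      rw [FiniteField.natCard_extension, Nat.card_eq_fintype_card]⟩

theorem disjoint_submodule_of_ne {p p' : ℙ K E} (h : p ≠ p') :
    Disjoint p.submodule p'.submodule :=
  (Submodule.isAtom_iff_finrank_eq_one.mpr p.finrank_submodule).disjoint_of_ne
    (Submodule.isAtom_iff_finrank_eq_one.mpr p'.finrank_submodule)
    (Projectivization.submodule_injective.ne h)

theorem orbit_linearEquiv_eq [FiniteDimensional K E] (A : Submodule K E) :
    MulAction.orbit (E ≃ₗ[K] E) A = {B : Submodule K E | finrank K B = finrank K A} := by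
  ext B
  constructor
  · rintro ⟨g, rfl⟩
    exact LinearEquiv.finrank_map_eq g A
  · intro hB
    obtain ⟨g, hg⟩ := Submodule.exists_linearEquiv_restrict_eq
      (LinearEquiv.ofFinrankEq A B (Eq.symm hB))
    refine ⟨g, Submodule.eq_of_le_of_finrank_eq ?_ ?_⟩
    · rintro _ ⟨x, hx, rfl⟩
      exact (hg ⟨x, hx⟩).symm ▸ (LinearEquiv.ofFinrankEq A B (Eq.symm hB) ⟨x, hx⟩).2
    · exact (LinearEquiv.finrank_map_eq g A).trans (Eq.symm hB)

variable [Fintype K] [Finite E]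

/-- The points of a projective space over the extension of degree `t`, viewed over `K`. -/
theorem exists_spread {t : ℕ} (ht : t ≠ 0) (hE : t ∣ finrank K E) :
    ∃ S : Set (Submodule K E), (∀ A ∈ S, finrank K A = t) ∧ S.Pairwise Disjoint ∧
      S.ncard * ((Fintype.card K : ℚ) ^ t - 1) = (Fintype.card K : ℚ) ^ finrank K E - 1 := by
  obtain ⟨m, hm⟩ := hE
  obtain ⟨L, _, _, hL, hcard⟩ := exists_finiteField_extension K ht
  have : Module.Finite K L := FiniteDimensional.of_finrank_pos (hL ▸ Nat.pos_of_ne_zero ht)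
  obtain ⟨e⟩ : Nonempty ((Fin m → L) ≃ₗ[K] E) := ⟨LinearEquiv.ofFinrankEq _ _ (by
    rw [finrank_pi_fintype, Finset.sum_const, Finset.card_univ, Fintype.card_fin, hL, hm,
      smul_eq_mul, mul_comm])⟩
  let f (p : ℙ L (Fin m → L)) : Submodule K E :=
    (p.submodule.restrictScalars K).map (e : (Fin m → L) →ₗ[K] E)
  have hdisj (p p') (h : p ≠ p') : Disjoint (f p) (f p') :=
    Submodule.disjoint_map e.injective
      ((Submodule.disjoint_restrictScalars_iff K).mpr (disjoint_submodule_of_ne h))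
  have hfinrank (p) : finrank K (f p) = t := by
    rw [LinearEquiv.finrank_map_eq, ← hL, ← mul_one (finrank K L), ← p.finrank_submodule,
      finrank_mul_finrank K L]
    rfl
  have hinj : Function.Injective f := fun p p' h => by
    by_contra hne
    have := hdisj p p' hne
    rw [h, disjoint_self] at this
    have hbot := hfinrank p'
    rw [this, finrank_bot] at hbot
    exact ht hbot.symm
  refine ⟨Set.range f, ?_, ?_, ?_⟩
  · rintro _ ⟨p, rfl⟩
    exact hfinrank p
  · rintro _ ⟨p, rfl⟩ _ ⟨p', rfl⟩ h
    exact hdisj p p' (ne_of_apply_ne f h)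
  · have hpoints := Projectivization.card L (Fin m → L)
    rw [Nat.card_congr e.toEquiv, natCard_eq_pow_finrank (K := K), Nat.card_eq_fintype_card,
      ← Set.ncard_range_of_injective hinj, hcard] at hpoints
    have hpos (k : ℕ) : 0 < Fintype.card K ^ k := Nat.pow_pos Fintype.card_pos
    rw [← Nat.cast_pow, ← Nat.cast_pow, ← Nat.cast_pred (hpos t), ← Nat.cast_pred (hpos _),
      hpoints, Nat.cast_mul]

theorem ncard_le_of_intersecting {d s : ℕ} (hE : finrank K E = d + 1)
    (hdvd : s + 1 ∣ d + 1) {N : Set (Submodule K E)} (hN : ∀ A ∈ N, finrank K A = s + 1)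
    (hinter : N.Intersecting) :
    (N.ncard : ℚ) ≤ GaussQ (Fintype.card K) d s := by
  have hq : 1 < Fintype.card K := Fintype.one_lt_card
  have : Finite (E ≃ₗ[K] E) := DFunLike.finite _
  obtain ⟨S, hS, hdisj, hcard⟩ := exists_spread (K := K) (E := E) s.succ_ne_zero (hE ▸ hdvd)
  have hle : s + 1 ≤ finrank K E := hE ▸ Nat.le_of_dvd d.succ_pos hdvd
  obtain ⟨A, -, hA⟩ := exists_le_finrank_eq (K := K) (W := (⊤ : Submodule K E))
    (hle.trans_eq (finrank_top K E).symm)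
  have horbit := orbit_linearEquiv_eq A
  rw [hA] at horbit
  have hmul : N.ncard * S.ncard ≤ _ := ncard_mul_ncard_le_ncard_orbit (G := E ≃ₗ[K] E) (x := A)
    (horbit ▸ hN) (horbit ▸ hS) fun g B hB C hC => by
      by_contra hne
      exact hinter hB.2 hC.2 (Submodule.disjoint_map g.injective (hdisj hB.1 hC.1 hne))
  have hcast : (N.ncard : ℚ) * S.ncard ≤ GaussQ (Fintype.card K) (d + 1) (s + 1) := by
    rw [horbit] at hmul
    rw [← hE, ← ncard_finrank_eq K E]
    exact_mod_cast hmul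
  refine le_of_mul_le_mul_right ?_ (pow_sub_one_pos hq d.succ_ne_zero)
  calc (N.ncard : ℚ) * ((Fintype.card K : ℚ) ^ (d + 1) - 1)
      = N.ncard * S.ncard * ((Fintype.card K : ℚ) ^ (s + 1) - 1) := by rw [mul_assoc, hcard, hE]
    _ ≤ GaussQ (Fintype.card K) (d + 1) (s + 1) * ((Fintype.card K : ℚ) ^ (s + 1) - 1) :=
        mul_le_mul_of_nonneg_right hcast (pow_sub_one_pos hq s.succ_ne_zero).le
    _ = GaussQ (Fintype.card K) d s * ((Fintype.card K : ℚ) ^ (d + 1) - 1) := by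
        rw [gaussQ_succ_succ_mul hq, mul_comm]

end Spreads

section Vectors

open Module

variable {K V : Type*} [Field K] [Fintype K] [AddCommGroup V] [Module K V] [Finite V]

theorem ncard_coe_eq_pow_finrank (W : Submodule K V) :
    (W : Set V).ncard = Fintype.card K ^ finrank K W := by
  rw [← Nat.card_eq_fintype_card, ← natCard_eq_pow_finrank (V := W)]
  rfl

theorem ncard_coe_diff_coe {A U : Submodule K V} (hAU : A ≤ U) :
    (((U : Set V) \ A).ncard : ℚ) =
      (Fintype.card K : ℚ) ^ finrank K U - (Fintype.card K : ℚ) ^ finrank K A := by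
  have hadd := Set.ncard_sdiff_add_ncard_of_subset (SetLike.coe_subset_coe.mpr hAU)
  rw [ncard_coe_eq_pow_finrank, ncard_coe_eq_pow_finrank] at hadd
  exact eq_sub_of_add_eq (by exact_mod_cast hadd)

theorem ncard_mul_le_of_pairwise_inf_le {A : Submodule K V} {d : ℕ} {𝒢 : Set (Submodule K V)}
    (hdim : ∀ G ∈ 𝒢, finrank K G = d) (hA : ∀ G ∈ 𝒢, A ≤ G)
    (hinter : 𝒢.Pairwise fun G H => G ⊓ H ≤ A) :
    (𝒢.ncard : ℚ) * ((Fintype.card K : ℚ) ^ d - (Fintype.card K : ℚ) ^ finrank K A) ≤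
      (Fintype.card K : ℚ) ^ finrank K V - (Fintype.card K : ℚ) ^ finrank K A := by
  lift 𝒢 to Finset (Submodule K V) using Set.toFinite 𝒢
  have hdisj : (𝒢 : Set (Submodule K V)).PairwiseDisjoint fun G => (G : Set V) \ A :=
    fun G hG H hH hne => Set.disjoint_left.mpr fun v hvG hvH =>
      hvG.2 (hinter hG hH hne ⟨hvG.1, hvH.1⟩)
  calc ((𝒢 : Set (Submodule K V)).ncard : ℚ) *
        ((Fintype.card K : ℚ) ^ d - (Fintype.card K : ℚ) ^ finrank K A)
      = ∑ G ∈ 𝒢, (((G : Set V) \ A).ncard : ℚ) := by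
        rw [Set.ncard_coe_finset, ← nsmul_eq_mul, ← Finset.sum_const]
        exact Finset.sum_congr rfl fun G hG => by
          rw [ncard_coe_diff_coe (hA G hG), hdim G hG]
    _ = ((⋃ G ∈ 𝒢, (G : Set V) \ A).ncard : ℚ) := by
        rw [← Nat.cast_sum, ← finsum_mem_coe_finset,
          ← (Finset.finite_toSet 𝒢).ncard_biUnion (fun _ _ => Set.toFinite _) hdisj]
        rfl
    _ ≤ ((((⊤ : Submodule K V) : Set V) \ A).ncard : ℚ) :=
        Nat.cast_le.mpr (Set.ncard_le_ncard (Set.iUnion₂_subset fun G _ =>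
          Set.sdiff_subset_sdiff_left (SetLike.coe_subset_coe.mpr le_top)) (Set.toFinite _))
    _ = _ := by rw [ncard_coe_diff_coe le_top, finrank_top]

end Vectors

section CoverFree

open Module
open scoped Finset

variable {K V : Type*} [Field K] [AddCommGroup V] [Module K V] {F : Set (Submodule K V)}

theorem IsCoverFree.not_le_inf_sup_inf (hF : IsCoverFree F) (hanti : IsAntichain (· ≤ ·) F)
    {F₀ F₁ F₂ : Submodule K V} (h₀ : F₀ ∈ F) (h₁ : F₁ ∈ F) (h₂ : F₂ ∈ F) (h₁₀ : F₁ ≠ F₀)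
    (h₂₀ : F₂ ≠ F₀) : ¬F₀ ≤ F₀ ⊓ F₁ ⊔ F₀ ⊓ F₂ := by
  intro hle
  by_cases h₁₂ : F₁ = F₂
  · rw [h₁₂, sup_idem] at hle
    exact hanti h₀ h₂ h₂₀.symm (hle.trans inf_le_right)
  · exact hF ⟨F₀, F₁, F₂, h₀, h₁, h₂, h₁₀.symm, h₂₀.symm, h₁₂, hle⟩

theorem isAntichain_of_finrank_eq [FiniteDimensional K V] {d : ℕ}
    (hdim : ∀ G ∈ F, finrank K G = d) : IsAntichain (· ≤ ·) F :=
  fun G hG H hH hne hle =>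
    hne (Submodule.eq_of_le_of_finrank_eq hle ((hdim G hG).trans (hdim H hH).symm))

/-- The number `|F_A|` of members of the family `F` containing `A`. -/
noncomputable def degree (F : Set (Submodule K V)) (A : Submodule K V) : ℕ :=
  {G ∈ F | A ≤ G}.ncard

theorem degree_mono [Finite V] {F' : Set (Submodule K V)} (h : F' ⊆ F) (A : Submodule K V) :
    degree F' A ≤ degree F A :=
  Set.ncard_le_ncard (fun _ hG => ⟨h hG.1, hG.2⟩) (Set.toFinite _)

theorem degree_pos [Finite V] {A G : Submodule K V} (hG : G ∈ F) (hA : A ≤ G) : 0 < degree F A :=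
  (Set.ncard_pos (Set.toFinite _)).mpr ⟨G, hG, hA⟩

theorem ncard_Nset_le [Fintype K] [Finite V] {s : ℕ} {G : Submodule K V} (hF : IsCoverFree F)
    (hanti : IsAntichain (· ≤ ·) F) (hG : G ∈ F) (hdim : finrank K G = 2 * (s + 1)) :
    ((Nset F (s + 1) G).ncard : ℚ) ≤ GaussQ (Fintype.card K) (2 * s + 1) s := by
  rw [Nset, ncard_setOf_le_and G fun T => finrank K T = s + 1 ∧ 1 < {G ∈ F | T ≤ G}.ncard]
  simp only [Submodule.finrank_map_subtype_eq]
  refine ncard_le_of_intersecting hdim (Dvd.intro_left 2 rfl) (fun A hA => hA.1)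
    fun A hA B hB hAB => ?_
  obtain ⟨F₁, ⟨hF₁, hA₁⟩, hne₁⟩ := Set.exists_ne_of_one_lt_ncard hA.2 G
  obtain ⟨F₂, ⟨hF₂, hB₂⟩, hne₂⟩ := Set.exists_ne_of_one_lt_ncard hB.2 G
  have hsup : A ⊔ B = ⊤ :=
    Submodule.eq_top_of_disjoint A B (by rw [hA.1, hB.1, hdim, two_mul]) hAB
  refine hF.not_le_inf_sup_inf hanti hG hF₁ hF₂ hne₁ hne₂ ?_
  calc G = A.map G.subtype ⊔ B.map G.subtype := by
        rw [← Submodule.map_sup, hsup, Submodule.map_subtype_top]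
    _ ≤ G ⊓ F₁ ⊔ G ⊓ F₂ := sup_le_sup (le_inf (Submodule.map_subtype_le _ _) hA₁)
        (le_inf (Submodule.map_subtype_le _ _) hB₂)

theorem ncard_Mset_add_ncard_Nset [Fintype K] [Finite V] {G : Submodule K V} (hG : G ∈ F) (t : ℕ) :
    ((Mset F t G).ncard : ℚ) + (Nset F t G).ncard = GaussQ (Fintype.card K) (finrank K G) t := by
  have hdisj : Disjoint (Mset F t G) (Nset F t G) :=
    Set.disjoint_left.mpr fun T hM hN => hN.2.2.ne' hM.2.2
  rw [← Nat.cast_add, ← Set.ncard_union_eq hdisj (Set.toFinite _) (Set.toFinite _),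
    ← ncard_le_and_finrank_eq]
  congr 2
  ext T
  simp only [Mset, Nset, Set.mem_union, Set.mem_ofPred_eq, ← and_or_left]
  refine and_congr_right fun hT => and_iff_left ?_
  have : 0 < {G ∈ F | T ≤ G}.ncard := degree_pos hG hT
  omega

theorem ncard_Mset_eq [Fintype K] [Finite V] {s : ℕ} {G : Submodule K V} (hG : G ∈ F)
    (hdim : finrank K G = 2 * (s + 1)) :
    ((Mset F (s + 1) G).ncard : ℚ) =
      (Fintype.card K : ℚ) ^ (s + 1) * GaussQ (Fintype.card K) (2 * s + 1) s +
        (GaussQ (Fintype.card K) (2 * s + 1) s - (Nset F (s + 1) G).ncard) := by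
  have hq : 1 < Fintype.card K := Fintype.one_lt_card
  have hadd := ncard_Mset_add_ncard_Nset hG (s + 1)
  rw [hdim, mul_add_one, gaussQ_succ_succ hq (by omega), gaussQ_two_mul_add_one_succ hq] at hadd
  linarith

theorem pow_le_ncard_Mset [Fintype K] [Finite V] {r s : ℕ} {G H : Submodule K V}
    (hF : IsCoverFree F) (hanti : IsAntichain (· ≤ ·) F) (hG : G ∈ F) (hH : H ∈ F) (hHG : H ≠ G)
    (hdim : finrank K G = s + r) (hr : r ≤ finrank K (G ⊓ H : Submodule K V)) :
    Fintype.card K ^ (s * r) ≤ (Mset F s G).ncard := by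
  obtain ⟨W, hW, hWr⟩ := exists_le_finrank_eq (W := H.comap G.subtype) (k := r) (by
    rwa [← Submodule.finrank_map_subtype_eq, Submodule.map_comap_subtype])
  have hquot : finrank K (G ⧸ W) = s := by
    have := W.finrank_quotient_add_finrank
    omega
  rw [← hWr, ← hquot, Mset, ncard_setOf_le_and G fun T => _ ∧ {G ∈ F | T ≤ G}.ncard = 1]
  refine (pow_le_ncard_isCompl W).trans (Set.ncard_le_ncard (fun S hS => ?_) (Set.toFinite _))
  have hS : IsCompl W S := hS
  constructor
  · rw [Submodule.finrank_map_subtype_eq]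
    exact (W.quotientEquivOfIsCompl S hS).finrank_eq.symm
  · refine Set.ncard_eq_one.mpr ⟨G, Set.Subset.antisymm (fun G' ⟨hG', hSG'⟩ => ?_) ?_⟩
    · by_contra hne
      refine hF.not_le_inf_sup_inf hanti hG hH hG' hHG hne ?_
      calc G = W.map G.subtype ⊔ S.map G.subtype := by
            rw [← Submodule.map_sup, hS.sup_eq_top, Submodule.map_subtype_top]
        _ ≤ G ⊓ H ⊔ G ⊓ G' := sup_le_sup
            (le_inf (Submodule.map_subtype_le _ _) (Submodule.map_le_iff_le_comap.mpr hW))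
            (le_inf (Submodule.map_subtype_le _ _) hSG')
    · rintro _ rfl
      exact ⟨hG, Submodule.map_subtype_le _ _⟩

theorem degree_le_of_pairwise [Fintype K] [Finite V] {t : ℕ} (ht : t ≠ 0)
    (hdim : ∀ G ∈ F, finrank K G = 2 * t)
    (hinter : F.Pairwise fun G H => finrank K (G ⊓ H : Submodule K V) ≤ t)
    {A : Submodule K V} (hA : finrank K A = t) :
    (degree F A : ℚ) ≤
      ((Fintype.card K : ℚ) ^ (finrank K V - t) - 1) / ((Fintype.card K : ℚ) ^ t - 1) := by
  have hq : 1 < Fintype.card K := Fintype.one_lt_card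
  have hmul := ncard_mul_le_of_pairwise_inf_le (A := A) (𝒢 := {G ∈ F | A ≤ G})
    (fun G hG => hdim G hG.1) (fun G hG => hG.2) fun G hG H hH hne =>
      (Submodule.eq_of_le_of_finrank_le (le_inf hG.2 hH.2)
        ((hinter hG.1 hH.1 hne).trans hA.ge)).ge
  have hpow : (Fintype.card K : ℚ) ^ finrank K V =
      (Fintype.card K : ℚ) ^ t * (Fintype.card K : ℚ) ^ (finrank K V - t) := by
    rw [← pow_add, Nat.add_sub_cancel' (hA ▸ A.finrank_le)]
  rw [hA, hpow, two_mul, pow_add] at hmul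
  rw [le_div_iff₀ (pow_sub_one_pos hq ht)]
  have hpos : 0 < (Fintype.card K : ℚ) ^ t := pow_pos (by exact_mod_cast Fintype.card_pos) t
  refine le_of_mul_le_mul_left ?_ hpos
  calc (Fintype.card K : ℚ) ^ t * (degree F A * ((Fintype.card K : ℚ) ^ t - 1))
      = degree F A * ((Fintype.card K : ℚ) ^ t * (Fintype.card K : ℚ) ^ t
          - (Fintype.card K : ℚ) ^ t) := by ring
    _ ≤ _ := hmul
    _ = _ := by ring

theorem setOf_degree_sup_span_singleton_eq_zero [Finite V] {S : Submodule K V}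
    (hS : degree F S = 1) :
    ∃ G ∈ F, S ≤ G ∧ {v | degree F (S ⊔ K ∙ v) = 0} = ((⊤ : Submodule K V) : Set V) \ G := by
  obtain ⟨G, hG⟩ := Set.ncard_eq_one.mp hS
  have hmem (H : Submodule K V) : H ∈ F ∧ S ≤ H ↔ H = G := Set.ext_iff.mp hG H
  obtain ⟨hGF, hSG⟩ := (hmem G).mpr rfl
  refine ⟨G, hGF, hSG, Set.ext fun v => ?_⟩
  simp only [degree, Set.ncard_eq_zero (Set.toFinite _), Set.eq_empty_iff_forall_notMem,
    Set.mem_ofPred_eq, Set.mem_sdiff, SetLike.mem_coe, Submodule.mem_top, true_and, sup_le_iff,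
    Submodule.span_singleton_le_iff_mem, ← and_assoc, hmem]
  exact ⟨fun h hv => h G ⟨rfl, hv⟩, fun hv H ⟨hH, hvH⟩ => hv (hH ▸ hvH)⟩

theorem ncard_sup_span_singleton_eq_le [Fintype K] [Finite V] {s : ℕ} {B : Submodule K V}
    (hB : finrank K B = s + 1) :
    ({x : Submodule K V × V | finrank K x.1 = s ∧ x.1 ⊔ K ∙ x.2 = B}.ncard : ℚ) ≤
      (Fintype.card K : ℚ) ^ (2 * (s + 1)) := by
  have hq : 1 < Fintype.card K := Fintype.one_lt_card
  have hsub : {x : Submodule K V × V | finrank K x.1 = s ∧ x.1 ⊔ K ∙ x.2 = B} ⊆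
      {S | S ≤ B ∧ finrank K S = s} ×ˢ (B : Set V) := by
    rintro ⟨S, v⟩ ⟨hS, rfl⟩
    exact ⟨⟨le_sup_left, hS⟩, le_sup_right (a := S) (Submodule.mem_span_singleton_self v)⟩
  have hhyper : ({S | S ≤ B ∧ finrank K S = s}.ncard : ℚ) ≤ (Fintype.card K : ℚ) ^ (s + 1) := by
    rw [ncard_le_and_finrank_eq, hB, gaussQ_add_symm hq s 1]
    simpa [add_comm] using gaussQ_add_le_pow hq s 1
  have hcard : ((B : Set V).ncard : ℚ) = (Fintype.card K : ℚ) ^ (s + 1) := by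
    rw [ncard_coe_eq_pow_finrank, hB, Nat.cast_pow]
  calc ({x : Submodule K V × V | finrank K x.1 = s ∧ x.1 ⊔ K ∙ x.2 = B}.ncard : ℚ)
      ≤ {S | S ≤ B ∧ finrank K S = s}.ncard * (B : Set V).ncard := by
        exact_mod_cast Set.ncard_prod ▸ Set.ncard_le_ncard hsub (Set.toFinite _)
    _ ≤ (Fintype.card K : ℚ) ^ (s + 1) * (Fintype.card K : ℚ) ^ (s + 1) := by
        rw [hcard]
        gcongr
    _ = (Fintype.card K : ℚ) ^ (2 * (s + 1)) := by rw [← pow_add, two_mul]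

open Classical in
theorem sum_degree (F D : Finset (Submodule K V)) :
    ∑ A ∈ D, degree (F : Set (Submodule K V)) A = ∑ G ∈ F, #{A ∈ D | A ≤ G} := by
  refine Eq.trans (Finset.sum_congr rfl fun A _ => ?_)
    (Finset.sum_card_bipartiteAbove_eq_sum_card_bipartiteBelow fun A G => A ≤ G)
  rw [← Set.ncard_coe_finset]
  simp only [degree, Finset.bipartiteAbove, Finset.coe_filter, Finset.mem_coe]

section DegreeClass

variable [Fintype (Submodule K V)]

open Classical in
/-- The `k`-dimensional subspaces `A` for which `|F_A|` lies in `I`: for `I = {0}`, `{1}` and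
`Set.Ioi 1` those contained in no member, in exactly one member and in several members of `F`. -/
noncomputable def degreeClass (F : Set (Submodule K V)) (k : ℕ) (I : Set ℕ) :
    Finset (Submodule K V) :=
  {A | finrank K A = k ∧ degree F A ∈ I}

theorem mem_degreeClass {A : Submodule K V} {k : ℕ} {I : Set ℕ} :
    A ∈ degreeClass F k I ↔ finrank K A = k ∧ degree F A ∈ I := by
  simp only [degreeClass, Finset.mem_filter, Finset.mem_univ, true_and]

theorem coe_degreeClass (F : Set (Submodule K V)) (k : ℕ) (I : Set ℕ) :
    (degreeClass F k I : Set (Submodule K V)) =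
      {A : Submodule K V | finrank K A = k ∧ degree F A ∈ I} :=
  Set.ext fun _ => mem_degreeClass

open Classical in
theorem card_degreeClass_filter_le (F : Set (Submodule K V)) (k : ℕ) (I : Set ℕ)
    (G : Submodule K V) :
    #{A ∈ degreeClass F k I | A ≤ G} = {A | A ≤ G ∧ finrank K A = k ∧ degree F A ∈ I}.ncard := by
  rw [← Set.ncard_coe_finset]
  simp only [Finset.coe_filter, mem_degreeClass, and_comm]

theorem sum_ncard_Mset (F : Set (Submodule K V)) (k : ℕ) (H : Finset (Submodule K V)) :
    ∑ G ∈ H, (Mset F k G).ncard =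
      ∑ A ∈ degreeClass F k {1}, degree (H : Set (Submodule K V)) A := by
  classical
  rw [sum_degree]
  exact Finset.sum_congr rfl fun G _ => (card_degreeClass_filter_le F k {1} G).symm

theorem sum_ncard_Nset (F : Set (Submodule K V)) (k : ℕ) (H : Finset (Submodule K V)) :
    ∑ G ∈ H, (Nset F k G).ncard =
      ∑ A ∈ degreeClass F k (Set.Ioi 1), degree (H : Set (Submodule K V)) A := by
  classical
  rw [sum_degree]
  exact Finset.sum_congr rfl fun G _ => (card_degreeClass_filter_le F k (Set.Ioi 1) G).symm

theorem card_degreeClass_add_add [Fintype K] [Finite V] (F : Set (Submodule K V)) (k : ℕ) :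
    (#(degreeClass F k {1}) + #(degreeClass F k {0}) + #(degreeClass F k (Set.Ioi 1)) : ℚ) =
      GaussQ (Fintype.card K) (finrank K V) k := by
  classical
  have hdisj₁ : Disjoint (degreeClass F k {1}) (degreeClass F k {0}) :=
    Finset.disjoint_left.mpr fun A h₁ h₀ => by
      simp only [mem_degreeClass, Set.mem_singleton_iff] at h₁ h₀
      omega
  have hdisj₂ : Disjoint (degreeClass F k {1} ∪ degreeClass F k {0})
      (degreeClass F k (Set.Ioi 1)) :=
    Finset.disjoint_left.mpr fun A h₁ h₂ => by
      simp only [mem_degreeClass, Finset.mem_union, Set.mem_singleton_iff, Set.mem_Ioi] at h₁ h₂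
      omega
  rw [← ncard_finrank_eq K V k, ← Nat.cast_add, ← Nat.cast_add,
    ← Finset.card_union_of_disjoint hdisj₁, ← Finset.card_union_of_disjoint hdisj₂,
    ← Set.ncard_coe_finset]
  congr 2
  ext A
  simp only [Finset.mem_coe, Finset.mem_union, mem_degreeClass, Set.mem_singleton_iff, Set.mem_Ioi,
    Set.mem_ofPred_eq, ← and_or_left]
  exact and_iff_left (by omega)

theorem card_degreeClass_one_mul_le [Fintype K] [Finite V] {d : ℕ}
    (hdim : ∀ G ∈ F, finrank K G = d) (s : ℕ) :
    (#(degreeClass F s {1}) : ℚ) *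
        ((Fintype.card K : ℚ) ^ finrank K V - (Fintype.card K : ℚ) ^ d) ≤
      (Fintype.card K : ℚ) ^ (2 * (s + 1)) * #(degreeClass F (s + 1) {0}) := by
  classical
  have := Fintype.ofFinite V
  let Q : Finset (Submodule K V × V) :=
    {x ∈ degreeClass F s {1} ×ˢ Finset.univ | degree F (x.1 ⊔ K ∙ x.2) = 0}
  have hQ : (#Q : ℚ) = #(degreeClass F s {1}) *
      ((Fintype.card K : ℚ) ^ finrank K V - (Fintype.card K : ℚ) ^ d) := by
    simp only [Q, Finset.card_filter, Finset.sum_product]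
    simp only [← Finset.card_filter]
    rw [Nat.cast_sum, ← nsmul_eq_mul, ← Finset.sum_const]
    refine Finset.sum_congr rfl fun S hS => ?_
    obtain ⟨G, hG, -, heq⟩ := setOf_degree_sup_span_singleton_eq_zero (mem_degreeClass.mp hS).2
    rw [← hdim G hG, ← finrank_top K V, ← ncard_coe_diff_coe le_top, ← heq,
      ← Set.ncard_coe_finset, Finset.coe_filter_univ]
  have hmaps : ∀ x ∈ Q, x.1 ⊔ K ∙ x.2 ∈ degreeClass F (s + 1) {0} := by
    rintro ⟨S, v⟩ hx
    obtain ⟨hS, hv⟩ := Finset.mem_filter.mp hx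
    obtain ⟨hdimS, hS⟩ := mem_degreeClass.mp (Finset.mem_product.mp hS).1
    refine mem_degreeClass.mpr ⟨?_, hv⟩
    rw [Submodule.finrank_sup_span_singleton, hdimS]
    intro hvS
    rw [sup_eq_left.mpr ((Submodule.span_singleton_le_iff_mem v S).mpr hvS), hS] at hv
    exact one_ne_zero hv
  have hfib : ∀ B ∈ degreeClass F (s + 1) {0},
      #{x ∈ Q | x.1 ⊔ K ∙ x.2 = B} ≤ Fintype.card K ^ (2 * (s + 1)) := by
    intro B hB
    refine le_trans ?_ (by exact_mod_cast ncard_sup_span_singleton_eq_le (mem_degreeClass.mp hB).1)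
    rw [← Set.ncard_coe_finset]
    refine Set.ncard_le_ncard (fun x hx => ?_) (Set.toFinite _)
    obtain ⟨hxQ, hxB⟩ := Finset.mem_filter.mp hx
    have hxP := (Finset.mem_product.mp (Finset.mem_filter.mp hxQ).1).1
    exact ⟨(mem_degreeClass.mp hxP).1, hxB⟩
  rw [← hQ]
  exact_mod_cast Finset.card_le_mul_card_image_of_maps_to hmaps _ hfib

theorem card_degreeClass_one_le [Finite K] [Finite V] {s : ℕ}
    (hdim : ∀ G ∈ F, finrank K G = 2 * (s + 1)) (hn : 2 * (s + 1) < finrank K V) :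
    #(degreeClass F s {1}) ≤ #(degreeClass F (s + 1) {0}) := by
  have := Fintype.ofFinite K
  have hq : (2 : ℚ) ≤ Fintype.card K := by exact_mod_cast Fintype.one_lt_card
  have hpow : (Fintype.card K : ℚ) ^ (2 * (s + 1)) ≤
      (Fintype.card K : ℚ) ^ finrank K V - (Fintype.card K : ℚ) ^ (2 * (s + 1)) := by
    rw [le_sub_iff_add_le, ← two_mul]
    calc (2 : ℚ) * (Fintype.card K : ℚ) ^ (2 * (s + 1))
        ≤ Fintype.card K * (Fintype.card K : ℚ) ^ (2 * (s + 1)) := by gcongr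
      _ = (Fintype.card K : ℚ) ^ (2 * (s + 1) + 1) := (pow_succ' _ _).symm
      _ ≤ (Fintype.card K : ℚ) ^ finrank K V := pow_le_pow_right₀ (by linarith) hn
  have hle := (mul_le_mul_of_nonneg_left hpow (Nat.cast_nonneg _)).trans
    (card_degreeClass_one_mul_le hdim s)
  rw [mul_comm] at hle
  exact_mod_cast le_of_mul_le_mul_left hle (by positivity)

theorem degree_eq_of_one_lt {F : Finset (Submodule K V)} {m : ℚ} {t : ℕ}
    (hle : ∀ A : Submodule K V, finrank K A = t →
      (degree (F : Set (Submodule K V)) A : ℚ) ≤ m)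
    (hsum : ∑ G ∈ F, ((Nset (F : Set (Submodule K V)) t G).ncard : ℚ) =
      #(degreeClass (F : Set (Submodule K V)) t (Set.Ioi 1)) * m)
    {A : Submodule K V} (hA : finrank K A = t) (hdeg : 1 < degree (F : Set (Submodule K V)) A) :
    (degree (F : Set (Submodule K V)) A : ℚ) = m := by
  rw [← Nat.cast_sum, sum_ncard_Nset, Nat.cast_sum, ← nsmul_eq_mul, ← Finset.sum_const] at hsum
  exact (Finset.sum_eq_sum_iff_of_le fun B hB => hle B (mem_degreeClass.mp hB).1).mp hsum A
    (mem_degreeClass.mpr ⟨hA, hdeg⟩)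

end DegreeClass

section Extremal

open Classical in
/-- The members of `F` that meet some other member in dimension more than `t`. -/
noncomputable def wide (F : Finset (Submodule K V)) (t : ℕ) : Finset (Submodule K V) :=
  {G ∈ F | ∃ H ∈ F, H ≠ G ∧ t < finrank K (G ⊓ H : Submodule K V)}

theorem wide_subset (F : Finset (Submodule K V)) (t : ℕ) : wide F t ⊆ F := by
  classical exact Finset.filter_subset _ _

open Classical in
theorem pairwise_finrank_inf_le_of_sdiff_wide (F : Finset (Submodule K V)) (t : ℕ) :
    ((F \ wide F t : Finset (Submodule K V)) : Set (Submodule K V)).Pairwise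
      fun G H => finrank K (G ⊓ H : Submodule K V) ≤ t := by
  intro G hG H hH hne
  obtain ⟨hGF, hG⟩ := Finset.mem_sdiff.mp hG
  by_contra! hlt
  exact hG (Finset.mem_filter.mpr ⟨hGF, H, (Finset.mem_sdiff.mp hH).1, hne.symm, hlt⟩)

variable [Fintype K] [Finite V] {F : Finset (Submodule K V)} {n s : ℕ}

/-- The total defect `∑ ([2s+1 choose s]_q - |N_{s+1}(G)|)` of the members `G` of `F` in the bound
`ncard_Nset_le`. -/
noncomputable def defect (F : Finset (Submodule K V)) (s : ℕ) : ℚ :=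
  ∑ G ∈ F, (GaussQ (Fintype.card K) (2 * s + 1) s -
    (Nset (F : Set (Submodule K V)) (s + 1) G).ncard)

theorem defect_nonneg (hF : IsCoverFree (F : Set (Submodule K V)))
    (hdim : ∀ G ∈ F, finrank K G = 2 * (s + 1)) : 0 ≤ defect F s :=
  Finset.sum_nonneg fun G hG =>
    sub_nonneg.mpr (ncard_Nset_le hF (isAntichain_of_finrank_eq hdim) hG (hdim G hG))

theorem ncard_Nset_eq_of_defect_eq_zero (hF : IsCoverFree (F : Set (Submodule K V)))
    (hdim : ∀ G ∈ F, finrank K G = 2 * (s + 1)) (hdefect : defect F s = 0)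
    {G : Submodule K V} (hG : G ∈ F) :
    ((Nset (F : Set (Submodule K V)) (s + 1) G).ncard : ℚ) =
      GaussQ (Fintype.card K) (2 * s + 1) s :=
  (sub_eq_zero.mp ((Finset.sum_eq_zero_iff_of_nonneg fun G hG => sub_nonneg.mpr
    (ncard_Nset_le hF (isAntichain_of_finrank_eq hdim) hG (hdim G hG))).mp hdefect G hG)).symm

variable [Fintype (Submodule K V)]

theorem card_wide_mul_le (hF : IsCoverFree (F : Set (Submodule K V)))
    (hdim : ∀ G ∈ F, finrank K G = 2 * (s + 1)) (hn : 2 * (s + 1) < finrank K V) :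
    (#(wide F (s + 1)) : ℚ) * GaussQ (Fintype.card K) (2 * s + 1) s ≤
      #(degreeClass (F : Set (Submodule K V)) (s + 1) {0}) := by
  classical
  have hgauss : GaussQ (Fintype.card K) (2 * s + 1) s ≤ (Fintype.card K : ℚ) ^ (s * (s + 2)) := by
    convert gaussQ_add_le_pow (q := Fintype.card K) Fintype.one_lt_card (s + 1) s using 2 <;> ring
  have hMset : ∀ G ∈ wide F (s + 1),
      Fintype.card K ^ (s * (s + 2)) ≤ (Mset (F : Set (Submodule K V)) s G).ncard := by
    intro G hG
    obtain ⟨hGF, H, hH, hne, hlt⟩ := Finset.mem_filter.mp hG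
    exact pow_le_ncard_Mset hF (isAntichain_of_finrank_eq hdim) hGF hH hne
      ((hdim G hGF).trans (by ring)) hlt
  have hcard : #(wide F (s + 1)) * Fintype.card K ^ (s * (s + 2)) ≤
      #(degreeClass (F : Set (Submodule K V)) (s + 1) {0}) :=
    calc #(wide F (s + 1)) * Fintype.card K ^ (s * (s + 2))
        ≤ ∑ G ∈ wide F (s + 1), (Mset (F : Set (Submodule K V)) s G).ncard :=
          Finset.card_nsmul_le_sum _ _ _ hMset
      _ = ∑ A ∈ degreeClass (F : Set (Submodule K V)) s {1},
            degree (wide F (s + 1) : Set (Submodule K V)) A := sum_ncard_Mset _ _ _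
      _ ≤ #(degreeClass (F : Set (Submodule K V)) s {1}) * 1 :=
          Finset.sum_le_card_nsmul _ _ _ fun A hA =>
            (degree_mono (by exact_mod_cast wide_subset F (s + 1)) A).trans
              (mem_degreeClass.mp hA).2.le
      _ ≤ #(degreeClass (F : Set (Submodule K V)) (s + 1) {0}) := by
          rw [mul_one]
          exact card_degreeClass_one_le hdim hn
  calc (#(wide F (s + 1)) : ℚ) * GaussQ (Fintype.card K) (2 * s + 1) s
      ≤ #(wide F (s + 1)) * (Fintype.card K : ℚ) ^ (s * (s + 2)) := by gcongr
    _ ≤ _ := by exact_mod_cast hcard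

open Classical in
theorem sum_ncard_Nset_sdiff_wide_le {t : ℕ} (ht : t ≠ 0) (hdim : ∀ G ∈ F, finrank K G = 2 * t) :
    (∑ G ∈ F \ wide F t, (Nset (F : Set (Submodule K V)) t G).ncard : ℚ) ≤
      #(degreeClass (F : Set (Submodule K V)) t (Set.Ioi 1)) *
        (((Fintype.card K : ℚ) ^ (finrank K V - t) - 1) / ((Fintype.card K : ℚ) ^ t - 1)) := by
  rw [← Nat.cast_sum, sum_ncard_Nset, Nat.cast_sum, ← nsmul_eq_mul]
  refine Finset.sum_le_card_nsmul _ _ _ fun A hA => degree_le_of_pairwise ht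
    (fun G hG => hdim G (Finset.mem_sdiff.mp hG).1) (pairwise_finrank_inf_le_of_sdiff_wide F t)
    (mem_degreeClass.mp hA).1

theorem card_degreeClass_one (hdim : ∀ G ∈ F, finrank K G = 2 * (s + 1)) :
    (#(degreeClass (F : Set (Submodule K V)) (s + 1) {1}) : ℚ) =
      (Fintype.card K : ℚ) ^ (s + 1) * (#F * GaussQ (Fintype.card K) (2 * s + 1) s) +
        defect F s := by
  have hsum := sum_ncard_Mset (F : Set (Submodule K V)) (s + 1) F
  rw [Finset.sum_const_nat fun A hA => (mem_degreeClass.mp hA).2, mul_one] at hsum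
  rw [← hsum, Nat.cast_sum, Finset.sum_congr rfl fun G hG => ncard_Mset_eq hG (hdim G hG),
    Finset.sum_add_distrib, Finset.sum_const, nsmul_eq_mul, defect, mul_left_comm]

theorem defect_add_card_add_card (hV : finrank K V = n + 1) (hs : s ≤ n)
    (hdim : ∀ G ∈ F, finrank K G = 2 * (s + 1))
    (hcard : #F * GaussQ (Fintype.card K) (2 * s + 1) s = GaussQ (Fintype.card K) n (s + 1)) :
    defect F s + #(degreeClass (F : Set (Submodule K V)) (s + 1) {0}) +
        #(degreeClass (F : Set (Submodule K V)) (s + 1) (Set.Ioi 1)) =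
      GaussQ (Fintype.card K) n s := by
  have htotal := card_degreeClass_add_add (F : Set (Submodule K V)) (s + 1)
  rw [card_degreeClass_one hdim, hcard, hV, gaussQ_succ_succ Fintype.one_lt_card hs] at htotal
  linarith

theorem card_mul_sub_defect_sub_le (hF : IsCoverFree (F : Set (Submodule K V)))
    (hdim : ∀ G ∈ F, finrank K G = 2 * (s + 1)) :
    #F * GaussQ (Fintype.card K) (2 * s + 1) s - defect F s -
        #(wide F (s + 1)) * GaussQ (Fintype.card K) (2 * s + 1) s ≤
      #(degreeClass (F : Set (Submodule K V)) (s + 1) (Set.Ioi 1)) *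
        (((Fintype.card K : ℚ) ^ (finrank K V - (s + 1)) - 1) /
          ((Fintype.card K : ℚ) ^ (s + 1) - 1)) := by
  classical
  refine le_trans ?_ (sum_ncard_Nset_sdiff_wide_le s.succ_ne_zero hdim)
  have hwide : ∑ G ∈ wide F (s + 1), ((Nset (F : Set (Submodule K V)) (s + 1) G).ncard : ℚ) ≤
      #(wide F (s + 1)) * GaussQ (Fintype.card K) (2 * s + 1) s := by
    rw [← nsmul_eq_mul]
    exact Finset.sum_le_card_nsmul _ _ _ fun G hG =>
      ncard_Nset_le hF (isAntichain_of_finrank_eq hdim) (wide_subset F _ hG)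
        (hdim G (wide_subset F _ hG))
  have hsplit := Finset.sum_sdiff (wide_subset F (s + 1))
    (f := fun G => ((Nset (F : Set (Submodule K V)) (s + 1) G).ncard : ℚ))
  rw [defect, Finset.sum_sub_distrib, Finset.sum_const, nsmul_eq_mul]
  linarith

theorem eq_zero_and_eq_zero_and_eq_of_weighted_le {m c δ w Z D : ℚ} (hm : 1 < m) (hδ : 0 ≤ δ)
    (hw : 0 ≤ w) (hwZ : w ≤ Z) (hsum : δ + Z + D = c) (hle : m * c - δ - w ≤ D * m) :
    δ = 0 ∧ w = 0 ∧ D = c := by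
  have hprod : (m - 1) * (δ + Z) ≤ 0 := by
    rw [← hsum] at hle
    linarith
  have hnonpos : δ + Z ≤ 0 := nonpos_of_mul_nonpos_right hprod (sub_pos.mpr hm)
  exact ⟨by linarith, by linarith, by linarith⟩

theorem defect_eq_zero_and_wide_eq_empty_and_card_eq (hF : IsCoverFree (F : Set (Submodule K V)))
    (hV : finrank K V = n + 1) (hn : 2 * (s + 1) ≤ n) (hdim : ∀ G ∈ F, finrank K G = 2 * (s + 1))
    (hcard : #F * GaussQ (Fintype.card K) (2 * s + 1) s = GaussQ (Fintype.card K) n (s + 1)) :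
    defect F s = 0 ∧ wide F (s + 1) = ∅ ∧
      (#(degreeClass (F : Set (Submodule K V)) (s + 1) (Set.Ioi 1)) : ℚ) =
        GaussQ (Fintype.card K) n s := by
  have hq : 1 < Fintype.card K := Fintype.one_lt_card
  have hβ : 0 < GaussQ (Fintype.card K) (2 * s + 1) s := gaussQ_pos hq (by omega)
  have hle := card_mul_sub_defect_sub_le hF hdim
  rw [hcard, gaussQ_succ_right hq, hV, Nat.add_sub_add_right] at hle
  obtain ⟨hdefect, hwide, hD⟩ := eq_zero_and_eq_zero_and_eq_of_weighted_le
    (one_lt_pow_sub_one_div_pow_sub_one hq s.succ_ne_zero (by omega : s + 1 < n - s))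
    (defect_nonneg hF hdim) (by positivity) (card_wide_mul_le hF hdim (by omega))
    (defect_add_card_add_card hV (by omega) hdim hcard) hle
  refine ⟨hdefect, Finset.card_eq_zero.mp ?_, hD⟩
  exact_mod_cast (mul_eq_zero.mp hwide).resolve_right hβ.ne'

theorem setOf_degree_eq_eq_degreeClass (hV : finrank K V = n + 1) (hn : 2 * (s + 1) ≤ n)
    (hdim : ∀ G ∈ F, finrank K G = 2 * (s + 1))
    (hcard : #F * GaussQ (Fintype.card K) (2 * s + 1) s = GaussQ (Fintype.card K) n (s + 1))
    (hdefect : defect F s = 0) (hwide : wide F (s + 1) = ∅)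
    (hD : (#(degreeClass (F : Set (Submodule K V)) (s + 1) (Set.Ioi 1)) : ℚ) =
      GaussQ (Fintype.card K) n s) :
    {A : Submodule K V | finrank K A = s + 1 ∧ (degree (F : Set (Submodule K V)) A : ℚ) =
      ((Fintype.card K : ℚ) ^ (n - s) - 1) / ((Fintype.card K : ℚ) ^ (s + 1) - 1)} =
    degreeClass (F : Set (Submodule K V)) (s + 1) (Set.Ioi 1) := by
  have hq : 1 < Fintype.card K := Fintype.one_lt_card
  have hm := one_lt_pow_sub_one_div_pow_sub_one hq s.succ_ne_zero (by omega : s + 1 < n - s)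
  have hpair := pairwise_finrank_inf_le_of_sdiff_wide F (s + 1)
  rw [hwide, Finset.sdiff_empty] at hpair
  rw [defect, Finset.sum_sub_distrib, Finset.sum_const, nsmul_eq_mul, hcard, sub_eq_zero,
    gaussQ_succ_right hq, mul_comm, ← hD] at hdefect
  ext A
  rw [Finset.mem_coe, mem_degreeClass]
  refine and_congr_right fun hA => ⟨fun hdeg => ?_, fun hdeg => ?_⟩
  · rw [← hdeg] at hm
    exact_mod_cast hm
  · refine degree_eq_of_one_lt (fun B hB => ?_) hdefect.symm hA hdeg
    rw [← Nat.add_sub_add_right n 1 s, ← hV]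
    exact degree_le_of_pairwise s.succ_ne_zero hdim hpair hB

end Extremal

end CoverFree

theorem stmt15 (q n t : ℕ) (K : Type*) [Field K] [Fintype K] (hK : Fintype.card K = q)
    (V : Type*) [AddCommGroup V] [Module K V] [FiniteDimensional K V]
    (hV : Module.finrank K V = n) (ht : 1 ≤ t) (hn : 2 * t + 1 ≤ n)
    (F : Set (Submodule K V)) (hdim : ∀ A ∈ F, Module.finrank K A = 2 * t)
    (hcf : IsCoverFree F)
    (hcard : (F.ncard : ℚ) = GaussQ q (n - 1) t / GaussQ q (2 * t - 1) t) :
    (∀ F₀ ∈ F, ((Mset F t F₀).ncard : ℚ) = (q : ℚ) ^ t * GaussQ q (2 * t - 1) t ∧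
      ((Nset F t F₀).ncard : ℚ) = GaussQ q (2 * t - 1) (t - 1)) ∧
    (({A : Submodule K V | Module.finrank K A = t ∧ {G ∈ F | A ≤ G}.ncard = 1}.ncard : ℚ) =
      (q : ℚ) ^ t * GaussQ q (n - 1) t) ∧
    (({A : Submodule K V | Module.finrank K A = t ∧
        ({G ∈ F | A ≤ G}.ncard : ℚ) = ((q : ℚ) ^ (n - t) - 1) / ((q : ℚ) ^ t - 1)}.ncard : ℚ) =
      GaussQ q (n - 1) (t - 1)) := by
  subst hK hV
  have hq : 1 < Fintype.card K := Fintype.one_lt_card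
  have : Finite V := Module.finite_of_finite K
  have : Fintype (Submodule K V) := Fintype.ofFinite _
  lift F to Finset (Submodule K V) using Set.toFinite F
  obtain ⟨s, rfl⟩ := Nat.exists_eq_add_of_le' ht
  obtain ⟨n, hV⟩ := Nat.exists_eq_add_of_le' (Nat.one_le_of_lt hn)
  simp only [hV, Nat.add_sub_cancel, Nat.add_sub_add_right, Set.ncard_coe_finset,
    show 2 * (s + 1) - 1 = 2 * s + 1 from rfl, gaussQ_two_mul_add_one_succ hq] at hcard ⊢
  have hcard := (eq_div_iff (gaussQ_pos hq (by omega : s ≤ 2 * s + 1)).ne').mp hcard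
  obtain ⟨hdefect, hwide, hD⟩ :=
    defect_eq_zero_and_wide_eq_empty_and_card_eq hcf hV (by omega) hdim hcard
  have hN {G} (hG : G ∈ F) := ncard_Nset_eq_of_defect_eq_zero hcf hdim hdefect hG
  have hΓ := setOf_degree_eq_eq_degreeClass hV (by omega) hdim hcard hdefect hwide hD
  refine ⟨fun G hG => ⟨?_, hN hG⟩, ?_, ?_⟩
  · rw [ncard_Mset_eq hG (hdim G hG), hN hG, sub_self, add_zero]
  · rw [← hcard, ← add_zero (_ * _), ← hdefect, ← card_degreeClass_one hdim,
      ← Set.ncard_coe_finset, coe_degreeClass]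
    rfl
  · rw [← hD, ← Set.ncard_coe_finset, ← hΓ]
    rfl
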